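/- Let V : ℝ → ℝⁿ and W : ℝ → Matrix (Fin n) (Fin n) ℝ be differentiable on [0,∞) and satisfy the co-evolution system V'(t) = W(t)·V(t) and W'(t) = V(t)V(t)ᵀ for all t ≥ 0, with W(0) symmetric. If ‖V(t)‖ → 0 as t → ∞, then V'(t) → 0 as t → ∞. -/

import Mathlib

/-!
The system has a matrix-valued first integral. Since `W' = V Vᵀ` is symmetric, `W` stays symmetric,
so `(W²)' = V (W V)ᵀ + (W V) Vᵀ = (V Vᵀ)'` and `C = W² - V Vᵀ` is constant on `[0, ∞)`. Hence
`‖V'‖² = Vᵀ W² V = Vᵀ C V + ‖V‖⁴`, which is a polynomial in `V` with fixed coefficients and no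
constant term, and so tends to `0` with `V`.
-/
open Matrix Set Filter

lemma eq_initial_of_hasDerivAt_zero (f : ℝ → ℝ) (hf : ∀ t : ℝ, 0 ≤ t → HasDerivAt f 0 t)
    (t : ℝ) (ht : 0 ≤ t) : f t = f 0 :=
  constant_of_has_deriv_right_zero (a := 0) (b := t)
    (fun x hx => (hf x hx.1).continuousAt.continuousWithinAt)
    (fun x hx => (hf x hx.1).hasDerivWithinAt) t ⟨ht, le_rfl⟩

theorem coevolution_derivative_vanishes
    (n : ℕ)
    (V : ℝ → Fin n → ℝ) (W : ℝ → Matrix (Fin n) (Fin n) ℝ)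
    (hV : ∀ t : ℝ, 0 ≤ t → HasDerivAt V (W t *ᵥ V t) t)
    (hW : ∀ t : ℝ, 0 ≤ t → ∀ i j,
      HasDerivAt (fun s => W s i j) (vecMulVec (V t) (V t) i j) t)
    (hsym : (W 0)ᵀ = W 0)
    (hlim : Tendsto (fun t => Real.sqrt (∑ i, V t i ^ 2)) atTop (nhds 0)) :
    Tendsto (fun t => W t *ᵥ V t) atTop (nhds 0) := by
  have hVi : ∀ t : ℝ, 0 ≤ t → ∀ i, HasDerivAt (fun s => V s i) ((W t *ᵥ V t) i) t :=
    fun t ht => hasDerivAt_pi.1 (hV t ht)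
  have hS : ∀ t : ℝ, 0 ≤ t → ∀ i j, W t i j = W t j i := by
    intro t ht i j
    have h := eq_initial_of_hasDerivAt_zero (fun s => W s i j - W s j i) (fun s hs => by
      refine ((hW s hs i j).sub (hW s hs j i)).congr_deriv ?_
      simp only [vecMulVec_apply]
      ring) t ht
    have h0 : W 0 j i = W 0 i j := congrFun (congrFun hsym i) j
    simp only [h0, sub_self] at h
    linarith
  set C : Matrix (Fin n) (Fin n) ℝ := W 0 * W 0 - vecMulVec (V 0) (V 0) with hC
  have hcons : ∀ t : ℝ, 0 ≤ t → W t * W t = C + vecMulVec (V t) (V t) := by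
    intro t ht
    ext i j
    have h := eq_initial_of_hasDerivAt_zero
      (fun s => (∑ k, W s i k * W s k j) - V s i * V s j) (fun s hs => by
      refine ((HasDerivAt.fun_sum fun k _ => (hW s hs i k).mul (hW s hs k j)).sub
        ((hVi s hs i).mul (hVi s hs j))).congr_deriv ?_
      simp only [vecMulVec_apply, mulVec, dotProduct, Finset.sum_add_distrib, Finset.sum_mul,
        Finset.mul_sum]
      rw [add_comm, sub_eq_zero]
      congr 1
      · exact Finset.sum_congr rfl fun k _ => by ring
      · exact Finset.sum_congr rfl fun k _ => by rw [hS s hs j k]; ring) t ht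
    simp only [hC, Matrix.add_apply, Matrix.sub_apply, Matrix.mul_apply, vecMulVec_apply]
    linarith
  have hV0 : Tendsto V atTop (nhds 0) := by
    refine tendsto_pi_nhds.2 fun i => squeeze_zero_norm (fun t => ?_) hlim
    refine Real.abs_le_sqrt ?_
    exact Finset.single_le_sum (f := fun i => V t i ^ 2) (fun i _ => sq_nonneg _)
      (Finset.mem_univ i)
  have henergy : ∀ t : ℝ, 0 ≤ t → (W t *ᵥ V t) ⬝ᵥ (W t *ᵥ V t)
      = V t ⬝ᵥ ((C + vecMulVec (V t) (V t)) *ᵥ V t) := by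
    intro t ht
    have hT : (W t)ᵀ = W t := by
      ext i j
      exact hS t ht j i
    rw [← hcons t ht, ← mulVec_mulVec, dotProduct_mulVec (V t), ← mulVec_transpose, hT]
  have hE : Tendsto (fun t => V t ⬝ᵥ ((C + vecMulVec (V t) (V t)) *ᵥ V t)) atTop (nhds 0) := by
    have hc : Continuous fun v : Fin n → ℝ => v ⬝ᵥ ((C + vecMulVec v v) *ᵥ v) := by
      simp only [dotProduct, mulVec, Matrix.add_apply, vecMulVec_apply]
      fun_prop
    simpa [Function.comp_def] using (hc.tendsto 0).comp hV0
  have hsqrt : Tendsto (fun t => √(V t ⬝ᵥ ((C + vecMulVec (V t) (V t)) *ᵥ V t))) atTop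
      (nhds 0) := by
    simpa using hE.sqrt
  refine tendsto_pi_nhds.2 fun i => squeeze_zero_norm' ?_ hsqrt
  filter_upwards [eventually_ge_atTop 0] with t ht
  refine Real.abs_le_sqrt ?_
  rw [← henergy t ht, sq]
  exact Finset.single_le_sum (f := fun i => (W t *ᵥ V t) i * (W t *ᵥ V t) i)
    (fun i _ => mul_self_nonneg _) (Finset.mem_univ i)
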